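/- arXiv:2005.02604 — 2 statements merged into one kernel-verified Lean document; each statement's English description precedes it below -/
import Mathlib

section
/- Let 1 ≤ p < n/2, let S be a symmetric endomorphism of V with associated bilinear form s(X,Y) = g(S(X),Y), and set h = (1/(n−2p))·s − (tr(S)/(2(n−p)(n−2p)))·g. Then every p-form ω on V satisfies ⟨Ric_{h⧆g}(ω), ω⟩ = −⟨Sω, ω⟩. -/
/-! For the form `h(X,Y) = g(HX,Y)` of a symmetric `H`, the curvature operator of `h ⧆ g` is
`R(X,Y) = HX ∧ Y + X ∧ HY`. In `Ric_R(ω)(X₁,…,X_p)`, the slot `i` receiving `e_j` and the slot `l`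
on which `R(X_i,e_j)` acts either coincide, which gives the contraction
`∑ⱼ R(X,eⱼ)eⱼ = -(n-2)HX - tr(H)X`, or differ. In the second case, `ω` is an alternating bilinear
form `B` of these two slots, and since `∑ⱼ B(eⱼ,Heⱼ) = 0` only `B(HX_i,X_l) + B(X_i,HX_l)`
survives. Counting slots, `Ric_R(ω) = -(n-2p) Hω + p tr(H) ω`, even before pairing with `ω`. For
`H = a S - b id`, the values of `a` and `b` are those that turn the right-hand side into `-Sω`. -/

open scoped RealInnerProductSpace BigOperators
open Finset

noncomputable section

variable {V : Type*} [NormedAddCommGroup V] [InnerProductSpace ℝ V]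

/-- The action `(L T)(X₁,…,X_k) = −Σᵢ T(X₁,…,L(Xᵢ),…,X_k)` of a map `L : V → V`
on a `(0,k)`-tensor `T`. -/
def tact {k : ℕ} (L : V → V) (T : (Fin k → V) → ℝ) (X : Fin k → V) : ℝ :=
  -∑ i, T (Function.update X i (L (X i)))

/-- The Kulkarni–Nomizu product of two bilinear forms. -/
def knProd (s₁ s₂ : V → V → ℝ) (X Y Z W : V) : ℝ :=
  s₁ X Z * s₂ Y W - s₁ X W * s₂ Y Z + s₁ Y W * s₂ X Z - s₁ Y Z * s₂ X W

/-- The inner product `g` as a bilinear form. -/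
def gf (X Y : V) : ℝ := ⟪X, Y⟫

/-- The curvature endomorphism `R(X,Y)`, determined by `g(R(X,Y)Z,W) = R(X,Y,Z,W)`,
expressed via the orthonormal basis `e`. -/
def curvOp {n : ℕ} (e : Fin n → V) (R : V → V → V → V → ℝ) (X Y Z : V) : V :=
  ∑ a, R X Y Z (e a) • e a

/-- The curvature term `Ric_R(T)(X₁,…,X_k) = Σᵢ Σⱼ ((R(Xᵢ,eⱼ))T)(X₁,…,eⱼ,…,X_k)`. -/
def ricTerm {n k : ℕ} (e : Fin n → V) (R : V → V → V → V → ℝ)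
    (T : (Fin k → V) → ℝ) (X : Fin k → V) : ℝ :=
  ∑ i : Fin k, ∑ j : Fin n, tact (curvOp e R (X i) (e j)) T (Function.update X i (e j))

/-- The inner product of two `(0,k)`-tensors with respect to the orthonormal basis `e`. -/
def tinner {n k : ℕ} (e : Fin n → V) (S T : (Fin k → V) → ℝ) : ℝ :=
  ∑ I : Fin k → Fin n, S (fun m => e (I m)) * T (fun m => e (I m))

/-- The skew endomorphism `(A ∧ B)Z = g(A,Z)B − g(B,Z)A`. -/
def wedgeOp (A B Z : V) : V := ⟪A, Z⟫ • B - ⟪B, Z⟫ • A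

section Contractions

variable {ι W : Type*} [Fintype ι] [AddCommGroup W] [Module ℝ W] (e : OrthonormalBasis ι ℝ V)

theorem sum_inner_smul_map (f : V →ₗ[ℝ] W) (X : V) : ∑ j, ⟪e j, X⟫ • f (e j) = f X := by
  simp only [← map_smul, ← map_sum, e.sum_repr']

theorem sum_wedgeOp_map_apply (L : V →ₗ[ℝ] V) (A : V) :
    ∑ j, wedgeOp A (L (e j)) (e j) = L A - LinearMap.trace ℝ V L • A := by
  simp only [wedgeOp, sum_sub_distrib, ← sum_smul, real_inner_comm (e _), sum_inner_smul_map,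
    L.trace_eq_sum_inner e]

theorem sum_isAlt_apply_isSymmetric {L : V →ₗ[ℝ] V} (hL : L.IsSymmetric)
    {B : V →ₗ[ℝ] V →ₗ[ℝ] W} (hB : B.IsAlt) : ∑ j, B (e j) (L (e j)) = 0 := by
  have expand : ∑ j, B (e j) (L (e j)) = ∑ j, ∑ k, ⟪e k, L (e j)⟫ • B (e j) (e k) := by
    simp only [sum_inner_smul_map]
  have flip_indices (j k : ι) :
      ⟪e k, L (e j)⟫ • B (e j) (e k) = -(⟪e j, L (e k)⟫ • B (e k) (e j)) := by
    rw [← hL, real_inner_comm, ← smul_neg, hB.neg]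
  have : IsAddTorsionFree W := .of_isTorsionFree ℝ W
  refine self_eq_neg.mp ?_
  calc ∑ j, B (e j) (L (e j)) = ∑ j, ∑ k, ⟪e k, L (e j)⟫ • B (e j) (e k) := expand
    _ = -∑ j, ∑ k, ⟪e j, L (e k)⟫ • B (e k) (e j) := by
        simp only [← sum_neg_distrib, ← flip_indices]
    _ = -∑ j, B (e j) (L (e j)) := by rw [sum_comm, expand]

theorem sum_isAlt_apply_wedgeOp {L : V →ₗ[ℝ] V} (hL : L.IsSymmetric)
    {B : V →ₗ[ℝ] V →ₗ[ℝ] W} (hB : B.IsAlt) (A Z : V) :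
    ∑ j, B (e j) (wedgeOp A (L (e j)) Z) = B A (L Z) := by
  have contract_left : ∑ j, ⟪L (e j), Z⟫ • B (e j) A = B (L Z) A := by
    simpa only [hL (e _) Z, LinearMap.flip_apply] using sum_inner_smul_map e (B.flip A) (L Z)
  simp only [wedgeOp, map_sub, map_smul, sum_sub_distrib, ← smul_sum,
    sum_isAlt_apply_isSymmetric e hL hB, contract_left]
  rw [smul_zero, zero_sub, hB.neg]

end Contractions

section Curvature

variable {n : ℕ} (e : OrthonormalBasis (Fin n) ℝ V)

/-- The bilinear form `(X, Y) ↦ g(L X, Y)` associated with an endomorphism `L`, in the unbundled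
shape that `knProd` expects. -/
def endoForm (L : V → V) (X Y : V) : ℝ := ⟪L X, Y⟫

theorem curvOp_knProd_endoForm (L M : V → V) (X Y Z : V) :
    curvOp e (knProd (endoForm L) (endoForm M)) X Y Z =
      wedgeOp (L X) (M Y) Z + wedgeOp (M X) (L Y) Z := by
  rw [← e.sum_repr' (wedgeOp (L X) (M Y) Z + wedgeOp (M X) (L Y) Z), curvOp]
  refine sum_congr rfl fun a _ => ?_
  simp only [knProd, endoForm, wedgeOp, inner_sub_right, inner_add_right, inner_smul_right,
    real_inner_comm (e a)]
  congr 1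
  ring

theorem curvOp_knProd_endoForm_gf (L : V → V) (X Y Z : V) :
    curvOp e (knProd (endoForm L) gf) X Y Z = wedgeOp (L X) Y Z + wedgeOp X (L Y) Z :=
  curvOp_knProd_endoForm e L id X Y Z

theorem sum_curvOp_knProd_endoForm_gf (H : V →ₗ[ℝ] V) (X : V) :
    ∑ j, curvOp e (knProd (endoForm H) gf) X (e j) (e j) =
      -((n : ℝ) - 2) • H X - LinearMap.trace ℝ V H • X := by
  have trace_id : LinearMap.trace ℝ V LinearMap.id = n := by
    simp [LinearMap.trace_eq_sum_inner _ e]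
  have contract_id := sum_wedgeOp_map_apply e LinearMap.id (H X)
  simp only [LinearMap.id_apply, trace_id] at contract_id
  simp only [curvOp_knProd_endoForm_gf, sum_add_distrib, contract_id, sum_wedgeOp_map_apply]
  module

theorem sum_isAlt_apply_curvOp_knProd_endoForm_gf {W : Type*} [AddCommGroup W] [Module ℝ W]
    {H : V →ₗ[ℝ] V} (hH : H.IsSymmetric) {B : V →ₗ[ℝ] V →ₗ[ℝ] W} (hB : B.IsAlt) (X Z : V) :
    ∑ j, B (e j) (curvOp e (knProd (endoForm H) gf) X (e j) Z) = B (H X) Z + B X (H Z) := by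
  have contract_id := sum_isAlt_apply_wedgeOp e LinearMap.IsSymmetric.id hB (H X) Z
  simp only [LinearMap.id_apply] at contract_id
  simp only [curvOp_knProd_endoForm_gf, map_add, sum_add_distrib, contract_id,
    sum_isAlt_apply_wedgeOp e hH hB]

end Curvature

section TwoSlots

variable {R M N ι : Type*} [CommSemiring R] [AddCommMonoid M] [Module R M] [AddCommMonoid N]
  [Module R N] [DecidableEq ι]

/-- The bilinear map obtained from a multilinear map by freezing all arguments except those in
the distinct slots `i` (first variable) and `l` (second variable). -/
def twoSlot (f : MultilinearMap R (fun _ : ι => M) N) (X : ι → M) {i l : ι} (hil : i ≠ l) :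
    M →ₗ[R] M →ₗ[R] N :=
  LinearMap.mk₂ R (fun u v => f (Function.update (Function.update X i u) l v))
    (fun u u' v => by simp only [Function.update_comm hil, f.map_update_add])
    (fun c u v => by simp only [Function.update_comm hil, f.map_update_smul])
    (fun u v v' => f.map_update_add _ l v v')
    (fun c u v => f.map_update_smul _ l c v)

theorem twoSlot_isAlt (ω : M [⋀^ι]→ₗ[R] N) (X : ι → M) {i l : ι} (hil : i ≠ l) :
    (twoSlot ω.toMultilinearMap X hil).IsAlt :=
  fun u => ω.map_update_update X hil u

end TwoSlots

section TensorAction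

theorem tact_id {E : Type*} {k : ℕ} (T : (Fin k → E) → ℝ) : tact id T = -(k : ℝ) • T := by
  ext X
  simp [tact]

variable {k : ℕ} (T : MultilinearMap ℝ (fun _ : Fin k => V) ℝ)

theorem tact_sub (L M : V → V) : tact (L - M) T = tact L T - tact M T := by
  ext X
  simp only [tact, Pi.sub_apply, T.map_update_sub, sum_sub_distrib]
  ring

theorem tact_smul (c : ℝ) (L : V → V) : tact (c • L) T = c • tact L T := by
  ext X
  simp only [tact, Pi.smul_apply, T.map_update_smul, ← smul_sum, smul_neg]

theorem tact_smul_sub_smul_id (a b : ℝ) (L : V → V) :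
    tact (a • L - b • id) T = a • tact L T + (b * k) • ⇑T := by
  rw [tact_sub, tact_smul, tact_smul, tact_id]
  module

end TensorAction

section CurvatureTerm

variable {n p : ℕ} (e : OrthonormalBasis (Fin n) ℝ V)

theorem sum_curvOp_same_slot (H : V →ₗ[ℝ] V) (T : MultilinearMap ℝ (fun _ : Fin p => V) ℝ)
    (X : Fin p → V) (i : Fin p) :
    ∑ j, T (Function.update X i (curvOp e (knProd (endoForm H) gf) (X i) (e j) (e j))) =
      -((n : ℝ) - 2) * T (Function.update X i (H (X i))) - LinearMap.trace ℝ V H * T X := by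
  rw [← T.map_update_sum, sum_curvOp_knProd_endoForm_gf, T.map_update_sub, T.map_update_smul,
    T.map_update_smul, Function.update_eq_self, smul_eq_mul, smul_eq_mul]

theorem sum_curvOp_distinct_slots {H : V →ₗ[ℝ] V} (hH : H.IsSymmetric)
    (ω : V [⋀^Fin p]→ₗ[ℝ] ℝ) (X : Fin p → V) {i l : Fin p} (hil : i ≠ l) :
    ∑ j, ω (Function.update (Function.update X i (e j)) l
        (curvOp e (knProd (endoForm H) gf) (X i) (e j) (X l))) =
      ω (Function.update X i (H (X i))) + ω (Function.update X l (H (X l))) := by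
  calc _ = twoSlot ω.toMultilinearMap X hil (H (X i)) (X l) +
        twoSlot ω.toMultilinearMap X hil (X i) (H (X l)) :=
      sum_isAlt_apply_curvOp_knProd_endoForm_gf e hH (twoSlot_isAlt ω X hil) (X i) (X l)
    _ = ω (Function.update (Function.update X i (H (X i))) l (X l)) +
        ω (Function.update (Function.update X i (X i)) l (H (X l))) := rfl
    _ = _ := by rw [Function.update_comm hil, Function.update_eq_self, Function.update_eq_self]

theorem ricTerm_knProd_endoForm_gf {H : V →ₗ[ℝ] V} (hH : H.IsSymmetric)
    (ω : V [⋀^Fin p]→ₗ[ℝ] ℝ) :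
    ricTerm e (knProd (endoForm H) gf) ω =
      -((n : ℝ) - 2 * p) • tact H ω + (p * LinearMap.trace ℝ V H) • ⇑ω := by
  ext X
  set t := LinearMap.trace ℝ V H
  let A (i : Fin p) : ℝ := ω (Function.update X i (H (X i)))
  have slot_sum (i l : Fin p) :
      ∑ j, ω (Function.update (Function.update X i (e j)) l
        (curvOp e (knProd (endoForm H) gf) (X i) (e j) (Function.update X i (e j) l))) =
      A i + A l - if l = i then n * A i + t * ω X else 0 := by
    obtain rfl | hli := eq_or_ne l i
    · simp only [Function.update_idem, Function.update_self, if_true]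
      have same_slot := sum_curvOp_same_slot e H ω.toMultilinearMap X l
      simp only [AlternatingMap.coe_multilinearMap] at same_slot
      simp only [A]
      linear_combination same_slot
    · simp only [Function.update_of_ne hli, if_neg hli, sub_zero]
      exact sum_curvOp_distinct_slots e hH ω X hli.symm
  calc ricTerm e (knProd (endoForm H) gf) ω X
      = -∑ i, ∑ l, (A i + A l - if l = i then n * A i + t * ω X else 0) := by
        simp only [ricTerm, tact, sum_neg_distrib, ← slot_sum]
        exact congrArg _ (sum_congr rfl fun i _ => sum_comm)
    _ = ((n : ℝ) - 2 * p) * ∑ i, A i + p * t * ω X := by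
        simp only [sum_sub_distrib, sum_add_distrib, sum_const, card_univ, Fintype.card_fin,
          nsmul_eq_mul, sum_ite_eq', mem_univ, if_true, ← mul_sum]
        ring
    _ = (-((n : ℝ) - 2 * p) • tact H ω + (p * t) • ⇑ω) X := by
        simp only [tact, Pi.add_apply, Pi.smul_apply, smul_eq_mul, A]
        ring

end CurvatureTerm

theorem stmt16_general {n p : ℕ} (hnp : n ≠ p) (hn2p : n ≠ 2 * p)
    (e : OrthonormalBasis (Fin n) ℝ V) {S : V →ₗ[ℝ] V} (hS : S.IsSymmetric) (h : V → V → ℝ)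
    (hh : ∀ X Y : V, h X Y = (1 / ((n : ℝ) - 2 * p)) * ⟪S X, Y⟫ -
      ((∑ a : Fin n, ⟪S (e a), e a⟫) / (2 * ((n : ℝ) - p) * ((n : ℝ) - 2 * p))) * ⟪X, Y⟫)
    (ω : V [⋀^Fin p]→ₗ[ℝ] ℝ) :
    ricTerm e (knProd h gf) ω = -tact S ω := by
  set t := ∑ a, ⟪S (e a), e a⟫ with ht
  set a : ℝ := 1 / ((n : ℝ) - 2 * p)
  set b : ℝ := t / (2 * ((n : ℝ) - p) * ((n : ℝ) - 2 * p))
  have sub_p_ne : (n : ℝ) - p ≠ 0 := sub_ne_zero.mpr (mod_cast hnp)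
  have sub_two_p_ne : (n : ℝ) - 2 * p ≠ 0 := sub_ne_zero.mpr (mod_cast hn2p)
  have ha : a * ((n : ℝ) - 2 * p) = 1 := one_div_mul_cancel sub_two_p_ne
  have hb : 2 * ((n : ℝ) - p) * b = a * t := by
    simp only [a, b]
    field_simp
  let H : V →ₗ[ℝ] V := a • S - b • LinearMap.id
  have hH : H.IsSymmetric := (hS.smul rfl).sub (LinearMap.IsSymmetric.id.smul rfl)
  have h_eq : h = endoForm H := by
    ext X Y
    simp [hh, endoForm, H, inner_sub_left, real_inner_smul_left]
  have trace_H : LinearMap.trace ℝ V H = a * t - b * n := by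
    simp [H, LinearMap.trace_eq_sum_inner _ e, ht, real_inner_comm, inner_sub_right,
      real_inner_smul_right, mul_sum, mul_comm]
  have tact_H : tact H ω = a • tact S ω + (b * p) • ⇑ω :=
    tact_smul_sub_smul_id ω.toMultilinearMap a b S
  rw [h_eq, ricTerm_knProd_endoForm_gf e hH, trace_H, tact_H]
  linear_combination (norm := module) (-ha) • tact S ω - (p * hb) • ⇑ω

/-- with `h = (1/(n−2p)) s − (tr S / (2(n−p)(n−2p))) g`, every `p`-form
satisfies `⟨Ric_{h⧆g}(ω), ω⟩ = −⟨Sω, ω⟩`. -/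
theorem stmt16 {n p : ℕ} (hp : 1 ≤ p) (hpn : 2 * p < n)
    (e : OrthonormalBasis (Fin n) ℝ V)
    (S : V →ₗ[ℝ] V) (hSsym : ∀ X Y : V, ⟪S X, Y⟫ = ⟪X, S Y⟫)
    (s : V → V → ℝ) (hs : ∀ X Y : V, s X Y = ⟪S X, Y⟫)
    (h : V → V → ℝ)
    (hh : ∀ X Y : V, h X Y =
      (1 / ((n : ℝ) - 2 * p)) * s X Y -
        ((∑ a : Fin n, ⟪S (e a), e a⟫) / (2 * ((n : ℝ) - p) * ((n : ℝ) - 2 * p))) * ⟪X, Y⟫)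
    (ω : AlternatingMap ℝ V ℝ (Fin p)) :
    tinner ⇑e (ricTerm ⇑e (knProd h gf) ⇑ω) ⇑ω = -(tinner ⇑e (tact ⇑S ⇑ω) ⇑ω) := by
  simp [tinner, stmt16_general (by omega) (by omega) e hSsym h (by simpa only [hs] using hh) ω]
end
end

section
/- Let S be a symmetric endomorphism of V with eigenvalues μ_1 ≤ μ_2 ≤ … ≤ μ_n (listed with multiplicity). Then every p-form ω on V with 1 ≤ p ≤ n satisfies −⟨Sω, ω⟩ ≥ (μ_1 + μ_2 + … + μ_p)·|ω|². -/
/-!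
The pairing `tinner` of multilinear forms is the same in every orthonormal basis, so it may be
computed in the eigenbasis `v` of `S`. There `S ω` is diagonal: its value on `v ∘ I` is
`-(∑ i, μ (I i)) * ω (v ∘ I)`. The multi-indices `I` with a repeated entry contribute nothing,
because `ω` is alternating, and for the others `∑ i, μ (I i)` runs over `p` distinct indices, hence
is at least the sum of the `p` smallest eigenvalues.
-/

open scoped RealInnerProductSpace BigOperators
open Finset

noncomputable section

variable {V : Type*} [NormedAddCommGroup V] [InnerProductSpace ℝ V]

lemma val_le_val_apply_of_strictMono {p n : ℕ} {f : Fin p → Fin n} (hf : StrictMono f)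
    (i : Fin p) : (i : ℕ) ≤ f i := by
  have hmaps : Set.MapsTo f (Iio i) (Iio (f i)) := fun j hj => by
    simpa using hf (by simpa using hj)
  simpa only [Fin.card_Iio] using card_le_card_of_injOn f hmaps hf.injective.injOn

lemma sum_castLE_le_sum_comp_of_injective {M : Type*} [AddCommMonoid M] [PartialOrder M]
    [IsOrderedAddMonoid M] {p n : ℕ} (hpn : p ≤ n) {μ : Fin n → M} (hμ : Monotone μ)
    {I : Fin p → Fin n} (hI : Function.Injective I) :
    ∑ i, μ (Fin.castLE hpn i) ≤ ∑ i, μ (I i) := by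
  have hsort : StrictMono (I ∘ Tuple.sort I) :=
    (Tuple.monotone_sort I).strictMono_of_injective (hI.comp (Tuple.sort I).injective)
  calc ∑ i, μ (Fin.castLE hpn i)
      ≤ ∑ i, μ (I (Tuple.sort I i)) :=
        sum_le_sum fun i _ => hμ (val_le_val_apply_of_strictMono hsort i)
    _ = ∑ i, μ (I i) := Equiv.sum_comp (Tuple.sort I) fun i => μ (I i)

lemma sum_castLE_mul_sq_le_sum_comp_mul_sq {R M : Type*} [CommRing R] [LinearOrder R]
    [IsOrderedRing R] [AddCommMonoid M] [Module R M] {p n : ℕ} (hpn : p ≤ n)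
    {μ : Fin n → R} (hμ : Monotone μ) (v : Fin n → M) (ω : AlternatingMap R M R (Fin p))
    (I : Fin p → Fin n) :
    (∑ i, μ (Fin.castLE hpn i)) * ω (fun i => v (I i)) ^ 2 ≤
      (∑ i, μ (I i)) * ω (fun i => v (I i)) ^ 2 := by
  by_cases hI : Function.Injective I
  · exact mul_le_mul_of_nonneg_right (sum_castLE_le_sum_comp_of_injective hpn hμ hI) (sq_nonneg _)
  · have hω : ω (fun i => v (I i)) = 0 :=
      ω.map_eq_zero_of_not_injective _ fun h => hI (Function.Injective.of_comp (f := v) h)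
    simp [hω]

lemma multilinearMap_apply_eq_sum_prod_inner_smul {𝕜 E F ι κ : Type*} [RCLike 𝕜]
    [NormedAddCommGroup E] [InnerProductSpace 𝕜 E] [AddCommMonoid F] [Module 𝕜 F] [Fintype ι]
    [DecidableEq ι] [Fintype κ] (b : OrthonormalBasis κ 𝕜 E)
    (T : MultilinearMap 𝕜 (fun _ : ι => E) F) (X : ι → E) :
    T X = ∑ J : ι → κ, (∏ m, inner 𝕜 (b (J m)) (X m)) • T (fun m => b (J m)) := by
  calc T X = T (fun m => ∑ j, inner 𝕜 (b j) (X m) • b j) := by simp only [b.sum_repr']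
    _ = _ := by simp only [T.map_sum, T.map_smul_univ]

-- Only `A` is expanded in `v`: regrouping the double sum produces the expansion of `B` in `e`.
lemma tinner_eq_tinner {n n' k : ℕ} (e : OrthonormalBasis (Fin n) ℝ V)
    (v : OrthonormalBasis (Fin n') ℝ V) (A B : MultilinearMap ℝ (fun _ : Fin k => V) ℝ) :
    tinner e A B = tinner v A B := by
  calc tinner e A B
      = ∑ I : Fin k → Fin n, ∑ J : Fin k → Fin n',
          (∏ m, ⟪v (J m), e (I m)⟫) * A (fun m => v (J m)) * B (fun m => e (I m)) := by
        simp only [tinner, multilinearMap_apply_eq_sum_prod_inner_smul v A fun _ => e _,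
          smul_eq_mul, sum_mul]
    _ = ∑ J : Fin k → Fin n', A (fun m => v (J m)) *
          ∑ I : Fin k → Fin n, (∏ m, ⟪e (I m), v (J m)⟫) * B (fun m => e (I m)) := by
        rw [sum_comm]
        simp only [mul_sum, real_inner_comm, mul_left_comm, mul_assoc]
    _ = tinner v A B := by
        simp only [tinner, multilinearMap_apply_eq_sum_prod_inner_smul e B fun _ => v _,
          smul_eq_mul]

section Action

variable {k : ℕ}

/-- The tensor `S T` of `tact`, for a linear map `S` and a multilinear form `T`, bundled as a
multilinear form so that `tinner_eq_tinner` applies to it. -/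
def tactMultilinear (S : V →ₗ[ℝ] V) (T : MultilinearMap ℝ (fun _ : Fin k => V) ℝ) :
    MultilinearMap ℝ (fun _ : Fin k => V) ℝ :=
  -∑ i, T.compLinearMap (Function.update (fun _ => LinearMap.id) i S)

lemma coe_tactMultilinear (S : V →ₗ[ℝ] V) (T : MultilinearMap ℝ (fun _ : Fin k => V) ℝ) :
    ⇑(tactMultilinear S T) = tact S T := by
  funext X
  have hupdate (i : Fin k) :
      (fun j => Function.update (fun _ => LinearMap.id) i S j (X j)) =
        Function.update X i (S (X i)) := by
    funext j
    obtain rfl | hj := eq_or_ne j i <;> simp [*]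
  simp [tactMultilinear, tact, MultilinearMap.compLinearMap_apply, hupdate]

lemma tinner_tact_eq_tinner_tact {n n' : ℕ} (e : OrthonormalBasis (Fin n) ℝ V)
    (v : OrthonormalBasis (Fin n') ℝ V) (S : V →ₗ[ℝ] V)
    (A B : MultilinearMap ℝ (fun _ : Fin k => V) ℝ) :
    tinner e (tact S A) B = tinner v (tact S A) B := by
  simpa only [coe_tactMultilinear] using tinner_eq_tinner e v (tactMultilinear S A) B

lemma tact_apply_of_forall_eq_smul {L : V → V} {X : Fin k → V} {c : Fin k → ℝ}
    (h : ∀ i, L (X i) = c i • X i) (T : MultilinearMap ℝ (fun _ : Fin k => V) ℝ) :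
    tact L T X = -((∑ i, c i) * T X) := by
  simp only [tact, h, T.map_update_smul, Function.update_eq_self, smul_eq_mul, sum_mul]

lemma neg_tinner_tact_of_forall_eq_smul {n : ℕ} {L : V → V} {v : Fin n → V} {μ : Fin n → ℝ}
    (h : ∀ i, L (v i) = μ i • v i) (T : MultilinearMap ℝ (fun _ : Fin k => V) ℝ) :
    -tinner v (tact L T) T =
      ∑ I : Fin k → Fin n, (∑ i, μ (I i)) * T (fun i => v (I i)) ^ 2 := by
  simp only [tinner, tact_apply_of_forall_eq_smul fun _ => h _, ← sum_neg_distrib, neg_mul,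
    neg_neg, sq, mul_assoc]

end Action

/-- `−⟨Sω, ω⟩ ≥ (μ₁ + ⋯ + μ_p)|ω|²` for the ordered eigenvalues `μ` of the
symmetric endomorphism `S`. -/
theorem stmt17 {n p : ℕ} (hp : 1 ≤ p) (hpn : p ≤ n)
    (e : OrthonormalBasis (Fin n) ℝ V)
    (S : V →ₗ[ℝ] V) (hSsym : ∀ X Y : V, ⟪S X, Y⟫ = ⟪X, S Y⟫)
    (μ : Fin n → ℝ) (hμ : Monotone μ)
    (v : OrthonormalBasis (Fin n) ℝ V) (hv : ∀ i : Fin n, S (v i) = μ i • v i)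
    (ω : AlternatingMap ℝ V ℝ (Fin p)) :
    -(tinner ⇑e (tact ⇑S ⇑ω) ⇑ω) ≥
      (∑ i : Fin p, μ (Fin.castLE hpn i)) * tinner ⇑e ⇑ω ⇑ω := by
  have hact : tinner e (tact S ω) ω = tinner v (tact S ω) ω :=
    tinner_tact_eq_tinner_tact e v S ω.toMultilinearMap ω.toMultilinearMap
  have hnorm : tinner e ω ω = tinner v ω ω :=
    tinner_eq_tinner e v ω.toMultilinearMap ω.toMultilinearMap
  rw [ge_iff_le, hact, hnorm]
  calc (∑ i : Fin p, μ (Fin.castLE hpn i)) * tinner v ω ω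
      = ∑ I : Fin p → Fin n, (∑ i, μ (Fin.castLE hpn i)) * ω (fun i => v (I i)) ^ 2 := by
        simp only [tinner, mul_sum, sq]
    _ ≤ ∑ I : Fin p → Fin n, (∑ i, μ (I i)) * ω (fun i => v (I i)) ^ 2 :=
        sum_le_sum fun I _ => sum_castLE_mul_sq_le_sum_comp_mul_sq hpn hμ v ω I
    _ = -tinner v (tact S ω) ω :=
        (neg_tinner_tact_of_forall_eq_smul hv ω.toMultilinearMap).symm
end
end
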